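/- Assume τ > (σ_max + σ_max,m+1)/2 and let r ∈ ℝ^{M+N} satisfy Π_m r = r. Then for every j ∈ ℕ there exists w ∈ K_j(B_m, r) such that ‖B_m w + r‖ ≤ 2 · (1 − 2/(1 + √((τ + σ_max,m+1)/(τ − σ_max,m+1))))^j · ‖r‖; that is, the j-th MINRES residual for the preconditioned correction equation B_m w = −r with exact singular subspaces satisfies this bound. -/

import Mathlib

open Matrix

noncomputable def vnorm {ι : Type*} [Fintype ι] (x : ι → ℝ) : ℝ :=
  Real.sqrt (∑ i, x i ^ 2)

noncomputable def Krylov {ι : Type*} [Fintype ι] [DecidableEq ι]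
    (B : Matrix ι ι ℝ) (r : ι → ℝ) (j : ℕ) : Submodule ℝ (ι → ℝ) :=
  Submodule.span ℝ {x | ∃ i < j, x = (B ^ i) *ᵥ r}

/-!
With `H = [[0, A], [Aᵀ, 0]]`, the matrix `B_m = P (H - τ) P` acts on the range of the orthogonal
projection `P` as the symmetric matrix `P H P - τ`, so the MINRES residual of `r = P r` is at most
`max |p|` over the spectrum of the latter times `‖r‖`, for any polynomial `p` of degree at most `j`
with `p 0 = 1`. The matrix `P H P` has norm at most `σ_max,m+1` because `P` removes the leading
singular vectors. Hence the spectrum lies within `σ_max,m+1 < τ` of `-τ`, and a shifted and scaled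
Chebyshev polynomial gives the bound.
-/

open Polynomial

open scoped Matrix.Norms.L2Operator

section Chebyshev

/-- The convergence factor `(√κ - 1) / (√κ + 1)` of Chebyshev iteration on an interval whose
endpoints have ratio `κ`, in the form used by the MINRES bounds. -/
noncomputable def chebyshevFactor (κ : ℝ) : ℝ :=
  1 - 2 / (1 + √κ)

lemma chebyshevFactor_one : chebyshevFactor 1 = 0 := by
  norm_num [chebyshevFactor]

lemma chebyshevFactor_pos {κ : ℝ} (hκ : 1 < κ) : 0 < chebyshevFactor κ := by
  have : 1 < √κ := Real.lt_sqrt_of_sq_lt (by simpa using hκ)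
  rw [chebyshevFactor, sub_pos, div_lt_one] <;> linarith

lemma chebyshevFactor_add_inv {κ : ℝ} (hκ : 1 < κ) :
    (chebyshevFactor κ + (chebyshevFactor κ)⁻¹) / 2 = (κ + 1) / (κ - 1) := by
  have hsqrt : 1 < √κ := Real.lt_sqrt_of_sq_lt (by simpa using hκ)
  have hsq : κ = √κ ^ 2 := (Real.sq_sqrt (by linarith)).symm
  have hfactor : chebyshevFactor κ = (√κ - 1) / (√κ + 1) := by
    rw [chebyshevFactor]
    field_simp
    ring
  have hplus : √κ + 1 ≠ 0 := by linarith
  have hminus : √κ - 1 ≠ 0 := by linarith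
  have hsub : κ - 1 = (√κ - 1) * (√κ + 1) := by linear_combination hsq
  rw [hfactor, hsub, inv_div]
  field_simp
  linear_combination -2 * hsq

lemma eval_T_half_add_inv {x : ℝ} (hx : 0 < x) (n : ℕ) :
    (Chebyshev.T ℝ n).eval ((x + x⁻¹) / 2) = (x ^ n + (x ^ n)⁻¹) / 2 := by
  rw [← Real.cosh_log hx, Chebyshev.T_real_cosh, ← Real.cosh_log (pow_pos hx n), Real.log_pow]
  rfl

lemma inv_chebyshevFactor_pow_le_eval_T {κ : ℝ} (hκ : 1 < κ) (n : ℕ) :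
    (chebyshevFactor κ ^ n)⁻¹ / 2 ≤ (Chebyshev.T ℝ n).eval ((κ + 1) / (κ - 1)) := by
  have hpos := chebyshevFactor_pos hκ
  rw [← chebyshevFactor_add_inv hκ, eval_T_half_add_inv hpos]
  linarith [pow_pos hpos n]

theorem exists_polynomial_abs_eval_sub_le {c s : ℝ} (hs : 0 ≤ s) (hsc : s < c) (n : ℕ) :
    ∃ p : ℝ[X], p.natDegree ≤ n ∧ p.eval 0 = 1 ∧
      ∀ y, |y| ≤ s → |p.eval (y - c)| ≤ 2 * chebyshevFactor ((c + s) / (c - s)) ^ n := by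
  rcases hs.eq_or_lt with rfl | hs
  · refine ⟨(C c⁻¹ * X + 1) ^ n, by compute_degree, by simp, fun y hy => ?_⟩
    rw [abs_nonpos_iff.1 hy]
    simp [hsc.ne', chebyshevFactor_one, le_mul_of_one_le_left]
  have hc : 0 < c - s := by linarith
  set κ := (c + s) / (c - s) with hκ_def
  have hκ : 1 < κ := by rw [hκ_def, one_lt_div hc]; linarith
  have hratio : c / s = (κ + 1) / (κ - 1) := by
    rw [div_eq_div_iff hs.ne' (by linarith)]
    linear_combination div_mul_cancel₀ (c + s) hc.ne'
  have hT : (chebyshevFactor κ ^ n)⁻¹ / 2 ≤ (Chebyshev.T ℝ n).eval (c / s) :=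
    hratio ▸ inv_chebyshevFactor_pow_le_eval_T hκ n
  have hfactor : 0 < chebyshevFactor κ ^ n := pow_pos (chebyshevFactor_pos hκ) n
  have hTpos : 0 < (Chebyshev.T ℝ n).eval (c / s) := lt_of_lt_of_le (by positivity) hT
  refine ⟨C ((Chebyshev.T ℝ n).eval (c / s))⁻¹ * (Chebyshev.T ℝ n).comp (C s⁻¹ * X + C (c / s)),
    ?_, by simp [hTpos.ne'], fun y hy => ?_⟩
  · calc _ ≤ (Chebyshev.T ℝ n).natDegree * (C s⁻¹ * X + C (c / s)).natDegree :=
          (natDegree_C_mul_le _ _).trans natDegree_comp_le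
      _ ≤ n * 1 := Nat.mul_le_mul (by simp) natDegree_linear_le
      _ = n := mul_one n
  · have hys : |y / s| ≤ 1 := by rwa [abs_div, abs_of_pos hs, div_le_one hs]
    have hshift : s⁻¹ * (y - c) + c / s = y / s := by ring
    simp only [eval_mul, eval_C, eval_comp, eval_add, eval_X, hshift]
    rw [abs_mul, abs_inv, abs_of_pos hTpos]
    calc _ ≤ ((chebyshevFactor κ ^ n)⁻¹ / 2)⁻¹ * 1 :=
          mul_le_mul (inv_anti₀ (by positivity) hT)
            (Chebyshev.abs_eval_T_real_le_one n hys) (abs_nonneg _) (by positivity)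
      _ = 2 * chebyshevFactor κ ^ n := by field_simp

end Chebyshev

theorem norm_aeval_le_of_isSelfAdjoint {R : Type*} [NormedRing R] [StarRing R] [NormedAlgebra ℝ R]
    [CStarRing R] [IsometricContinuousFunctionalCalculus ℝ R IsSelfAdjoint]
    [CompleteSpace R] {a : R} (ha : IsSelfAdjoint a) {p : ℝ[X]} {s c : ℝ} (has : ‖a‖ ≤ s)
    (hp : ∀ y, |y| ≤ s → |p.eval y| ≤ c) : ‖aeval a p‖ ≤ c := by
  rw [← cfc_polynomial p a ha]
  have hc : 0 ≤ c := (abs_nonneg _).trans (hp 0 (by simpa using (norm_nonneg a).trans has))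
  refine norm_cfc_le hc fun y hy => hp y (le_trans ?_ has)
  cases subsingleton_or_nontrivial R
  · simp [spectrum.of_subsingleton] at hy
  · exact spectrum.norm_le_norm_of_mem hy

section EuclideanNorm

variable {ι κ : Type*} [Fintype ι] [Fintype κ]

lemma vnorm_eq_norm (x : ι → ℝ) : vnorm x = ‖WithLp.toLp 2 x‖ := by
  simp [vnorm, EuclideanSpace.norm_eq]

lemma vnorm_sq (x : ι → ℝ) : vnorm x ^ 2 = ∑ i, x i ^ 2 :=
  Real.sq_sqrt (by positivity)

lemma vnorm_sum_sq (x : ι ⊕ κ → ℝ) :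
    vnorm x ^ 2 = vnorm (x ∘ Sum.inl) ^ 2 + vnorm (x ∘ Sum.inr) ^ 2 := by
  simp [vnorm_sq]

lemma vnorm_nonneg (x : ι → ℝ) : 0 ≤ vnorm x :=
  Real.sqrt_nonneg _

variable [DecidableEq κ]

lemma vnorm_mulVec_le (A : Matrix ι κ ℝ) (x : κ → ℝ) : vnorm (A *ᵥ x) ≤ ‖A‖ * vnorm x := by
  simp only [vnorm_eq_norm]
  exact l2_opNorm_mulVec A (WithLp.toLp 2 x)

lemma l2_opNorm_le_of_vnorm_le {A : Matrix ι κ ℝ} {c : ℝ} (hc : 0 ≤ c)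
    (h : ∀ x, vnorm (A *ᵥ x) ≤ c * vnorm x) : ‖A‖ ≤ c := by
  rw [l2_opNorm_def]
  refine ContinuousLinearMap.opNorm_le_bound _ hc fun x => ?_
  have := h x.ofLp
  simp only [vnorm_eq_norm] at this
  exact this

lemma l2_opNorm_le_one_of_conjTranspose_mul_self {𝕜 : Type*} [RCLike 𝕜] {W : Matrix ι κ 𝕜}
    (hW : Wᴴ * W = 1) : ‖W‖ ≤ 1 := by
  have hsq : ‖W‖ * ‖W‖ ≤ 1 := by
    rw [← l2_opNorm_conjTranspose_mul_self, hW]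
    exact IsStarProjection.norm_le _ (.one _)
  nlinarith [norm_nonneg W]

variable [DecidableEq ι]

lemma l2_opNorm_fromBlocks_zero_transpose_le (K : Matrix ι κ ℝ) :
    ‖fromBlocks 0 K Kᵀ 0‖ ≤ ‖K‖ := by
  refine l2_opNorm_le_of_vnorm_le (norm_nonneg K) fun x => ?_
  have hinl := vnorm_mulVec_le K (x ∘ Sum.inr)
  have hinr := vnorm_mulVec_le Kᵀ (x ∘ Sum.inl)
  rw [show ‖Kᵀ‖ = ‖K‖ from l2_opNorm_conjTranspose K] at hinr
  refine le_of_sq_le_sq ?_ (mul_nonneg (norm_nonneg K) (vnorm_nonneg x))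
  calc _ = vnorm (K *ᵥ (x ∘ Sum.inr)) ^ 2 + vnorm (Kᵀ *ᵥ (x ∘ Sum.inl)) ^ 2 := by
        simp [vnorm_sum_sq, fromBlocks_mulVec]
    _ ≤ (‖K‖ * vnorm (x ∘ Sum.inr)) ^ 2 + (‖K‖ * vnorm (x ∘ Sum.inl)) ^ 2 := by
        gcongr
        · exact vnorm_nonneg (K *ᵥ (x ∘ Sum.inr))
        · exact vnorm_nonneg (Kᵀ *ᵥ (x ∘ Sum.inl))
    _ = (‖K‖ * vnorm x) ^ 2 := by rw [mul_pow _ (vnorm x), vnorm_sum_sq x]; ring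

end EuclideanNorm

section Krylov

variable {ι : Type*} [Fintype ι] [DecidableEq ι]

lemma aeval_mulVec_mem_krylov (B : Matrix ι ι ℝ) (r : ι → ℝ) {n : ℕ} {p : ℝ[X]}
    (hp : p.degree < n) : aeval B p *ᵥ r ∈ Krylov B r n := by
  rw [aeval_eq_sum_range, sum_mulVec]
  refine Submodule.sum_mem _ fun i _ => ?_
  rw [smul_mulVec]
  rcases lt_or_ge i n with hi | hi
  · exact Submodule.smul_mem _ _ (Submodule.subset_span ⟨i, hi, rfl⟩)
  · simp [coeff_eq_zero_of_degree_lt (hp.trans_le (Nat.cast_le.2 hi))]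

lemma exists_mem_krylov_mulVec_add_eq (B : Matrix ι ι ℝ) (r : ι → ℝ) {n : ℕ} {p : ℝ[X]}
    (hp : p.natDegree ≤ n) (hp0 : p.eval 0 = 1) :
    ∃ w ∈ Krylov B r n, B *ᵥ w + r = aeval B p *ᵥ r := by
  have hne : p ≠ 0 := by rintro rfl; simp at hp0
  refine ⟨aeval B p.divX *ᵥ r, aeval_mulVec_mem_krylov B r ?_, ?_⟩
  · exact (degree_divX_lt hne).trans_le (degree_le_of_natDegree_le hp)
  · conv_rhs => rw [← X_mul_divX_add p, coeff_zero_eq_eval_zero, hp0]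
    simp [add_mulVec, mulVec_mulVec]

lemma aeval_mul_mulVec_of_commute {D P : Matrix ι ι ℝ} (hDP : Commute D P) {r : ι → ℝ}
    (hr : P *ᵥ r = r) (p : ℝ[X]) : aeval (D * P) p *ᵥ r = aeval D p *ᵥ r := by
  have hpow (k : ℕ) : P ^ k *ᵥ r = r := by
    induction k with
    | zero => simp
    | succ k ih => rw [pow_succ, ← mulVec_mulVec, hr, ih]
  simp only [aeval_eq_sum_range, sum_mulVec, smul_mulVec, hDP.mul_pow, ← mulVec_mulVec, hpow]

theorem exists_mem_krylov_compression_vnorm_le {H P : Matrix ι ι ℝ} (hH : H.IsHermitian)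
    (hP : IsStarProjection P) {c s : ℝ} (hs : ‖P * H * P‖ ≤ s) (hsc : s < c) {r : ι → ℝ}
    (hr : P *ᵥ r = r) (n : ℕ) :
    ∃ w ∈ Krylov (P * (H - c • 1) * P) r n, vnorm ((P * (H - c • 1) * P) *ᵥ w + r) ≤
      2 * chebyshevFactor ((c + s) / (c - s)) ^ n * vnorm r := by
  set G := P * H * P with hG
  have hPG : P * G = G := by simp only [hG, ← mul_assoc, hP.isIdempotentElem.eq]
  have hGP : G * P = G := by simp only [hG, mul_assoc, hP.isIdempotentElem.eq]
  have hGsa : IsSelfAdjoint G := hH.isSelfAdjoint.conjugate_self hP.isSelfAdjoint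
  have hcomm : Commute (G - c • 1) P := by simp [Commute, SemiconjBy, sub_mul, mul_sub, hPG, hGP]
  have hcompress : P * (H - c • 1) * P = (G - c • 1) * P := by
    simp [sub_mul, mul_sub, hGP, ← hG, hP.isIdempotentElem.eq]
  obtain ⟨p, hdeg, hp0, hp⟩ :=
    exists_polynomial_abs_eval_sub_le ((norm_nonneg _).trans hs) hsc n
  obtain ⟨w, hw, hwr⟩ := exists_mem_krylov_mulVec_add_eq (P * (H - c • 1) * P) r hdeg hp0
  refine ⟨w, hw, ?_⟩
  calc _ = vnorm (aeval G (p.comp (X - C c)) *ᵥ r) := by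
        rw [hwr, hcompress, aeval_mul_mulVec_of_commute hcomm hr]
        simp [aeval_comp, Algebra.algebraMap_eq_smul_one]
    _ ≤ ‖aeval G (p.comp (X - C c))‖ * vnorm r := vnorm_mulVec_le _ _
    _ ≤ _ := by
        gcongr
        · exact vnorm_nonneg r
        · exact norm_aeval_le_of_isSelfAdjoint hGsa hs fun y hy => by simpa using hp y hy

end Krylov

section Projection

variable {R ι κ : Type*} [Fintype ι] [Fintype κ]

lemma isStarProjection_fromBlocks [NonUnitalSemiring R] [StarRing R] {P : Matrix ι ι R}
    {Q : Matrix κ κ R}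
    (hP : IsStarProjection P) (hQ : IsStarProjection Q) :
    IsStarProjection (fromBlocks P 0 0 Q) where
  isIdempotentElem := by
    simp [IsIdempotentElem, fromBlocks_multiply, hP.isIdempotentElem.eq, hQ.isIdempotentElem.eq]
  isSelfAdjoint := IsHermitian.fromBlocks hP.isSelfAdjoint (by simp) hQ.isSelfAdjoint

variable [DecidableEq κ]

lemma isStarProjection_one_sub_mul_conjTranspose [Ring R] [StarRing R] [DecidableEq ι]
    {W : Matrix ι κ R} (hW : Wᴴ * W = 1) : IsStarProjection (1 - W * Wᴴ) := by
  refine .one_sub ⟨?_, isHermitian_mul_conjTranspose_self W⟩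
  rw [IsIdempotentElem, Matrix.mul_assoc, ← Matrix.mul_assoc Wᴴ, hW, Matrix.one_mul]

theorem exists_mem_krylov_block_compression_vnorm_le [DecidableEq ι] {A : Matrix ι κ ℝ}
    {P : Matrix ι ι ℝ} {Q : Matrix κ κ ℝ} (hP : IsStarProjection P) (hQ : IsStarProjection Q)
    {c s : ℝ} (hA : ‖A * Q‖ ≤ s) (hsc : s < c) {r : ι ⊕ κ → ℝ}
    (hr : fromBlocks P 0 0 Q *ᵥ r = r) (n : ℕ) :
    let B := fromBlocks P 0 0 Q * fromBlocks ((-c) • 1) A Aᵀ ((-c) • 1) * fromBlocks P 0 0 Q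
    ∃ w ∈ Krylov B r n, vnorm (B *ᵥ w + r) ≤
      2 * chebyshevFactor ((c + s) / (c - s)) ^ n * vnorm r := by
  have hH : (fromBlocks 0 A Aᵀ 0).IsHermitian := .fromBlocks (by simp) rfl (by simp)
  have hshift : fromBlocks ((-c) • 1) A Aᵀ ((-c) • 1) = fromBlocks 0 A Aᵀ 0 - c • 1 := by
    simp [← fromBlocks_one, fromBlocks_smul, sub_eq_add_neg, fromBlocks_neg, fromBlocks_add]
  have hcompress : fromBlocks P 0 0 Q * fromBlocks 0 A Aᵀ 0 * fromBlocks P 0 0 Q =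
      fromBlocks 0 (P * (A * Q)) (P * (A * Q))ᵀ 0 := by
    have hPt : Pᵀ = P := hP.isSelfAdjoint
    have hQt : Qᵀ = Q := hQ.isSelfAdjoint
    simp [fromBlocks_multiply, hPt, hQt, Matrix.mul_assoc]
  have hnorm : ‖fromBlocks 0 (P * (A * Q)) (P * (A * Q))ᵀ 0‖ ≤ s :=
    calc _ ≤ ‖P‖ * ‖A * Q‖ := (l2_opNorm_fromBlocks_zero_transpose_le _).trans (l2_opNorm_mul _ _)
      _ ≤ 1 * s := by gcongr; exact hP.norm_le
      _ = s := one_mul s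
  rw [hshift]
  exact exists_mem_krylov_compression_vnorm_le hH (isStarProjection_fromBlocks hP hQ)
    (hcompress ▸ hnorm) hsc hr n

end Projection

section SingularValues

variable {M N m : ℕ}

lemma l2_opNorm_rectDiagonal_le {𝕜 : Type*} [RCLike 𝕜] {S : Matrix (Fin M) (Fin N) 𝕜}
    {d : Fin N → 𝕜} (hS : ∀ i j, S i j = if (i : ℕ) = j then d j else 0) : ‖S‖ ≤ ‖d‖ := by
  have hgram : Sᴴ * S = diagonal fun j : Fin N => if (j : ℕ) < M then star (d j) * d j else 0 := by
    ext j k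
    rcases eq_or_ne j k with rfl | hjk
    · simpa [mul_apply, hS, apply_ite star, ← ite_and] using
        Fin.sum_univ_eq_sum_range (fun i => if i = (j : ℕ) then star (d j) * d j else 0) M
    · rw [diagonal_apply_ne _ hjk, mul_apply]
      refine Finset.sum_eq_zero fun i _ => ?_
      have := Fin.val_ne_of_ne hjk
      simp only [conjTranspose_apply, hS, apply_ite star, star_zero]
      grind
  refine abs_le_of_sq_le_sq' ?_ (norm_nonneg d) |>.2
  rw [sq, ← l2_opNorm_conjTranspose_mul_self, hgram, l2_opNorm_diagonal,
    pi_norm_le_iff_of_nonneg (sq_nonneg _)]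
  intro j
  have hj := norm_le_pi_norm d j
  split_ifs
  · rw [norm_mul, norm_star, sq]
    gcongr
  · simp

lemma transpose_mul_self_submatrix_of_injective {R ι κ μ : Type*} [NonAssocSemiring R] [Fintype ι]
    [DecidableEq κ] [DecidableEq μ] {V : Matrix ι κ R} (hV : Vᵀ * V = 1) {f : μ → κ}
    (hf : Function.Injective f) : (V.submatrix id f)ᵀ * V.submatrix id f = 1 := by
  rw [transpose_submatrix, ← submatrix_mul _ _ _ _ _ Function.bijective_id, hV,
    submatrix_one _ hf]

lemma l2_opNorm_rectDiagonal_mul_le {σ : Fin N → ℝ} {S : Matrix (Fin M) (Fin N) ℝ}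
    (hS : ∀ i j, S i j = if (i : ℕ) = j then σ j else 0) {n : ℕ} {Y : Matrix (Fin N) (Fin n) ℝ}
    (hY : ∀ j : Fin N, (j : ℕ) < m → ∀ k, Y j k = 0) {s : ℝ} (hs : 0 ≤ s)
    (hσ : ∀ j : Fin N, m ≤ (j : ℕ) → |σ j| ≤ s) : ‖S * Y‖ ≤ s * ‖Y‖ := by
  let d : Fin N → ℝ := fun j => if m ≤ (j : ℕ) then σ j else 0
  let T : Matrix (Fin M) (Fin N) ℝ := of fun i j => if (i : ℕ) = j then d j else 0
  have hST : S * Y = T * Y := by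
    ext i k
    rw [mul_apply, mul_apply]
    refine Finset.sum_congr rfl fun j _ => ?_
    rcases lt_or_ge (j : ℕ) m with hj | hj
    · simp [hY j hj]
    · simp [T, d, hS, hj]
  have hT : ‖T‖ ≤ s := by
    refine (l2_opNorm_rectDiagonal_le fun _ _ => rfl).trans ((pi_norm_le_iff_of_nonneg hs).2 ?_)
    intro j
    rcases lt_or_ge (j : ℕ) m with hj | hj
    · simpa [d, hj.not_ge] using hs
    · simpa [d, hj] using hσ j hj
  calc _ ≤ ‖T‖ * ‖Y‖ := hST ▸ l2_opNorm_mul T Y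
    _ ≤ s * ‖Y‖ := by gcongr

lemma l2_opNorm_mul_one_sub_leading_le {U : Matrix (Fin M) (Fin M) ℝ}
    {V : Matrix (Fin N) (Fin N) ℝ} (hU : Uᵀ * U = 1) (hV : Vᵀ * V = 1) {σ : Fin N → ℝ}
    {S : Matrix (Fin M) (Fin N) ℝ} (hS : ∀ i j, S i j = if (i : ℕ) = j then σ j else 0)
    {Vm : Matrix (Fin N) (Fin m) ℝ} (hmN : m ≤ N) (hVm : Vm = V.submatrix id (Fin.castLE hmN))
    {s : ℝ} (hs : 0 ≤ s) (hσ : ∀ j : Fin N, m ≤ (j : ℕ) → |σ j| ≤ s) :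
    ‖U * S * Vᵀ * (1 - Vm * Vmᵀ)‖ ≤ s := by
  have hVmVm : Vmᵀ * Vm = 1 :=
    hVm ▸ transpose_mul_self_submatrix_of_injective hV (Fin.castLE_injective hmN)
  have hleading : Vmᵀ * (1 - Vm * Vmᵀ) = 0 := by
    rw [Matrix.mul_sub, ← Matrix.mul_assoc, hVmVm, Matrix.mul_one, Matrix.one_mul, sub_self]
  have hrows (j : Fin N) (hj : (j : ℕ) < m) (k : Fin N) :
      (Vᵀ * (1 - Vm * Vmᵀ) : Matrix (Fin N) (Fin N) ℝ) j k = 0 := by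
    have hrow := congrFun₂ hleading ⟨j, hj⟩ k
    rw [hVm] at hrow ⊢
    exact hrow
  have hVt : ‖Vᵀ‖ ≤ 1 :=
    l2_opNorm_le_one_of_conjTranspose_mul_self (by simpa using mul_eq_one_comm.1 hV)
  have hQ : ‖1 - Vm * Vmᵀ‖ ≤ 1 := (isStarProjection_one_sub_mul_conjTranspose hVmVm).norm_le
  calc _ = ‖U * (S * (Vᵀ * (1 - Vm * Vmᵀ)))‖ := by simp only [Matrix.mul_assoc]
    _ ≤ ‖U‖ * (s * (‖Vᵀ‖ * ‖1 - Vm * Vmᵀ‖)) := (l2_opNorm_mul _ _).trans <| by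
        gcongr
        exact (l2_opNorm_rectDiagonal_mul_le hS hrows hs hσ).trans <| by
          gcongr
          exact l2_opNorm_mul _ _
    _ ≤ 1 * (s * (1 * 1)) := by
        gcongr
        exact l2_opNorm_le_one_of_conjTranspose_mul_self hU
    _ = s := by ring

theorem minres_bound_precond_exact_largest_general (hmM : m ≤ M) (hmN : m ≤ N)
    (A : Matrix (Fin M) (Fin N) ℝ)
    (U : Matrix (Fin M) (Fin M) ℝ) (V : Matrix (Fin N) (Fin N) ℝ)
    (hU : Uᵀ * U = 1) (hV : Vᵀ * V = 1)
    (σ : Fin N → ℝ) (S : Matrix (Fin M) (Fin N) ℝ)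
    (hS : ∀ i j, S i j = if (i : ℕ) = (j : ℕ) then σ j else 0)
    (hA : A = U * S * Vᵀ)
    (τ s : ℝ) (hs : 0 ≤ s) (hσ : ∀ j : Fin N, m ≤ (j : ℕ) → |σ j| ≤ s) (hτ : s < τ)
    (Um : Matrix (Fin M) (Fin m) ℝ) (hUm : Um = U.submatrix id (Fin.castLE hmM))
    (Vm : Matrix (Fin N) (Fin m) ℝ) (hVm : Vm = V.submatrix id (Fin.castLE hmN))
    (B P Bm : Matrix (Fin M ⊕ Fin N) (Fin M ⊕ Fin N) ℝ)
    (hB : B = fromBlocks ((-τ) • 1) A Aᵀ ((-τ) • 1))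
    (hP : P = fromBlocks (1 - Um * Umᵀ) 0 0 (1 - Vm * Vmᵀ))
    (hBm : Bm = P * B * P)
    (r : Fin M ⊕ Fin N → ℝ) (hr : P *ᵥ r = r) (j : ℕ) :
    ∃ w ∈ Krylov Bm r j, vnorm (Bm *ᵥ w + r) ≤
      2 * (1 - 2 / (1 + √((τ + s) / (τ - s)))) ^ j * vnorm r := by
  subst hA hB hP hBm
  have hUmUm : Umᵀ * Um = 1 :=
    hUm ▸ transpose_mul_self_submatrix_of_injective hU (Fin.castLE_injective hmM)
  have hVmVm : Vmᵀ * Vm = 1 :=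
    hVm ▸ transpose_mul_self_submatrix_of_injective hV (Fin.castLE_injective hmN)
  exact exists_mem_krylov_block_compression_vnorm_le
    (isStarProjection_one_sub_mul_conjTranspose hUmUm)
    (isStarProjection_one_sub_mul_conjTranspose hVmVm)
    (l2_opNorm_mul_one_sub_leading_le hU hV hS hmN hVm hs hσ) hτ hr j

end SingularValues

/-- Theorem 4.2(i). MINRES bound for the preconditioned JDSVD correction
equation with exact singular subspaces, in the case `τ > (σ_max + σ_max,m+1)/2`. -/
theorem minres_bound_precond_exact_largest {M N m : ℕ} (hN : 2 ≤ N) (hMN : N ≤ M)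
    (hm : 1 ≤ m) (hmN : m < N)
    (A : Matrix (Fin M) (Fin N) ℝ)
    (U : Matrix (Fin M) (Fin M) ℝ) (V : Matrix (Fin N) (Fin N) ℝ)
    (hU : Uᵀ * U = 1) (hV : Vᵀ * V = 1)
    (σ : Fin N → ℝ) (hσ : ∀ i, 0 ≤ σ i)
    (S : Matrix (Fin M) (Fin N) ℝ)
    (hS : ∀ i j, S i j = if (i : ℕ) = (j : ℕ) then σ j else 0)
    (hA : A = U * S * Vᵀ)
    (τ : ℝ) (hτ0 : 0 ≤ τ)
    (hclosest : ∀ i j : Fin N, (i : ℕ) < m → m ≤ (j : ℕ) → |σ i - τ| ≤ |σ j - τ|)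
    (σmax σmaxm1 : ℝ)
    (hσmax : IsGreatest (Set.range σ) σmax)
    (hσmaxm1 : IsGreatest (σ '' {i : Fin N | m ≤ (i : ℕ)}) σmaxm1)
    (hτ : (σmax + σmaxm1) / 2 < τ)
    (Um : Matrix (Fin M) (Fin m) ℝ)
    (hUm : ∀ i j, Um i j = U i ⟨(j : ℕ), by have := j.isLt; omega⟩)
    (Vm : Matrix (Fin N) (Fin m) ℝ)
    (hVm : ∀ i j, Vm i j = V i ⟨(j : ℕ), by have := j.isLt; omega⟩)
    (B P Bm : Matrix (Fin M ⊕ Fin N) (Fin M ⊕ Fin N) ℝ)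
    (hB : B = Matrix.fromBlocks ((-τ) • 1) A Aᵀ ((-τ) • 1))
    (hP : P = Matrix.fromBlocks (1 - Um * Umᵀ) 0 0 (1 - Vm * Vmᵀ))
    (hBm : Bm = P * B * P)
    (r : Fin M ⊕ Fin N → ℝ) (hr : P *ᵥ r = r) :
    ∀ j : ℕ, ∃ w ∈ Krylov Bm r j,
      vnorm (Bm *ᵥ w + r) ≤
        2 * (1 - 2 / (1 + Real.sqrt ((τ + σmaxm1) / (τ - σmaxm1)))) ^ j * vnorm r := by
  obtain ⟨⟨i, _, hσi⟩, hub⟩ := hσmaxm1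
  have hle : σmaxm1 ≤ σmax := hσi ▸ hσmax.2 ⟨i, rfl⟩
  exact minres_bound_precond_exact_largest_general (by omega) hmN.le A U V hU hV σ S hS hA τ σmaxm1
    (hσi ▸ hσ i) (fun j hj => (abs_of_nonneg (hσ j)).trans_le (hub ⟨j, hj, rfl⟩)) (by linarith)
    Um (Matrix.ext hUm) Vm (Matrix.ext hVm) B P Bm hB hP hBm r hr
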